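/- Let γ : ℝ × ℝ → ℝ² be a smooth family of regular plane curves with speed σ(t,s) := ‖∂_s γ(t,s)‖ > 0, unit tangent τ := σ⁻¹∂_sγ, unit normal n := (τ², −τ¹), signed curvature κ := (σ⁻¹∂_s n)·τ, evolution velocity u := ∂_t γ, and tangential derivative ∇_τ f := σ⁻¹∂_s f. Then for all (t,s): ∂_t∂_t κ = −∇_τ∇_τ(∂_t u · n) + (∇_τ κ)·(τ · ∂_t u) − κ²·(n · ∂_t u) + 2(∇_τ u · n)·(τ · ∇_τ∇_τ u) + 4(∇_τ u · τ)·(n · ∇_τ∇_τ u) + 6κ·(∇_τ u · τ)² − 3κ·(∇_τ u · n)². (Second-order evolution equation for the signed curvature under an arbitrary evolution velocity.) -/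

import Mathlib

/-- Dot product on `ℝ²`. -/
def dotp (a b : ℝ × ℝ) : ℝ := a.1 * b.1 + a.2 * b.2

/-- Partial derivative in the time variable of an `ℝ²`-valued function of `(t,s)`. -/
noncomputable def ptd (f : ℝ × ℝ → ℝ × ℝ) (q : ℝ × ℝ) : ℝ × ℝ :=
  deriv (fun t => f (t, q.2)) q.1

/-- Partial derivative in the parameter variable of an `ℝ²`-valued function of `(t,s)`. -/
noncomputable def psd (f : ℝ × ℝ → ℝ × ℝ) (q : ℝ × ℝ) : ℝ × ℝ :=
  deriv (fun s => f (q.1, s)) q.2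

/-- Partial derivative in the time variable of a scalar function of `(t,s)`. -/
noncomputable def ptds (f : ℝ × ℝ → ℝ) (q : ℝ × ℝ) : ℝ :=
  deriv (fun t => f (t, q.2)) q.1

/-- Partial derivative in the parameter variable of a scalar function of `(t,s)`. -/
noncomputable def psds (f : ℝ × ℝ → ℝ) (q : ℝ × ℝ) : ℝ :=
  deriv (fun s => f (q.1, s)) q.2

open scoped ContDiff

lemma hasDerivAt_slice_s {f : ℝ × ℝ → ℝ} (hf : ContDiff ℝ ∞ f) (q : ℝ × ℝ) :
    HasDerivAt (fun s => f (q.1, s)) (fderiv ℝ f q (0, 1)) q.2 := by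
  have h1 : HasFDerivAt f (fderiv ℝ f q) (q.1, q.2) :=
    (hf.differentiable (by simp) q).hasFDerivAt
  exact h1.comp_hasDerivAt q.2 ((hasDerivAt_const q.2 q.1).prodMk (hasDerivAt_id q.2))

lemma hasDerivAt_slice_t {f : ℝ × ℝ → ℝ} (hf : ContDiff ℝ ∞ f) (q : ℝ × ℝ) :
    HasDerivAt (fun t => f (t, q.2)) (fderiv ℝ f q (1, 0)) q.1 := by
  have h1 : HasFDerivAt f (fderiv ℝ f q) (q.1, q.2) :=
    (hf.differentiable (by simp) q).hasFDerivAt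
  exact h1.comp_hasDerivAt q.1 ((hasDerivAt_id q.1).prodMk (hasDerivAt_const q.1 q.2))

lemma psds_eq_fderiv {f : ℝ × ℝ → ℝ} (hf : ContDiff ℝ ∞ f) :
    psds f = fun q => fderiv ℝ f q (0, 1) :=
  funext fun q => (hasDerivAt_slice_s hf q).deriv

lemma ptds_eq_fderiv {f : ℝ × ℝ → ℝ} (hf : ContDiff ℝ ∞ f) :
    ptds f = fun q => fderiv ℝ f q (1, 0) :=
  funext fun q => (hasDerivAt_slice_t hf q).deriv

lemma contDiff_psds {f : ℝ × ℝ → ℝ} (hf : ContDiff ℝ ∞ f) : ContDiff ℝ ∞ (psds f) := by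
  rw [psds_eq_fderiv hf]
  exact (hf.fderiv_right (by simp)).clm_apply contDiff_const

lemma contDiff_ptds {f : ℝ × ℝ → ℝ} (hf : ContDiff ℝ ∞ f) : ContDiff ℝ ∞ (ptds f) := by
  rw [ptds_eq_fderiv hf]
  exact (hf.fderiv_right (by simp)).clm_apply contDiff_const

lemma psds_ptds_comm {f : ℝ × ℝ → ℝ} (hf : ContDiff ℝ ∞ f) :
    psds (ptds f) = ptds (psds f) := by
  rw [psds_eq_fderiv (contDiff_ptds hf), ptds_eq_fderiv (contDiff_psds hf),
    psds_eq_fderiv hf, ptds_eq_fderiv hf]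
  funext q
  have hd : DifferentiableAt ℝ (fderiv ℝ f) q :=
    (hf.fderiv_right (m := ∞) (by simp)).differentiable (by simp) q
  have hs : IsSymmSndFDerivAt ℝ f q := hf.contDiffAt.isSymmSndFDerivAt (by
    simp only [minSmoothness_of_isRCLikeNormedField]
    exact WithTop.coe_le_coe.mpr (le_top : (2 : ℕ∞) ≤ ⊤))
  rw [fderiv_clm_apply hd (differentiableAt_const _), fderiv_clm_apply hd (differentiableAt_const _)]
  simpa using hs (0, 1) (1, 0)

section rules
variable {f g : ℝ × ℝ → ℝ}

lemma psds_mul (hf : ContDiff ℝ ∞ f) (hg : ContDiff ℝ ∞ g) :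
    psds (fun q => f q * g q) = fun q => psds f q * g q + f q * psds g q := by
  funext q
  rw [psds_eq_fderiv hf, psds_eq_fderiv hg]
  exact ((hasDerivAt_slice_s hf q).mul (hasDerivAt_slice_s hg q)).deriv

lemma ptds_mul (hf : ContDiff ℝ ∞ f) (hg : ContDiff ℝ ∞ g) :
    ptds (fun q => f q * g q) = fun q => ptds f q * g q + f q * ptds g q := by
  funext q
  rw [ptds_eq_fderiv hf, ptds_eq_fderiv hg]
  exact ((hasDerivAt_slice_t hf q).mul (hasDerivAt_slice_t hg q)).deriv

lemma psds_add (hf : ContDiff ℝ ∞ f) (hg : ContDiff ℝ ∞ g) :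
    psds (fun q => f q + g q) = fun q => psds f q + psds g q := by
  funext q
  rw [psds_eq_fderiv hf, psds_eq_fderiv hg]
  exact ((hasDerivAt_slice_s hf q).add (hasDerivAt_slice_s hg q)).deriv

lemma ptds_add (hf : ContDiff ℝ ∞ f) (hg : ContDiff ℝ ∞ g) :
    ptds (fun q => f q + g q) = fun q => ptds f q + ptds g q := by
  funext q
  rw [ptds_eq_fderiv hf, ptds_eq_fderiv hg]
  exact ((hasDerivAt_slice_t hf q).add (hasDerivAt_slice_t hg q)).deriv

lemma psds_neg (hf : ContDiff ℝ ∞ f) : psds (fun q => -f q) = fun q => -psds f q := by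
  funext q
  rw [psds_eq_fderiv hf]
  exact (hasDerivAt_slice_s hf q).neg.deriv

lemma ptds_neg (hf : ContDiff ℝ ∞ f) : ptds (fun q => -f q) = fun q => -ptds f q := by
  funext q
  rw [ptds_eq_fderiv hf]
  exact (hasDerivAt_slice_t hf q).neg.deriv

end rules

lemma psd_eq (F : ℝ × ℝ → ℝ × ℝ) {f g : ℝ × ℝ → ℝ} (hf : ContDiff ℝ ∞ f) (hg : ContDiff ℝ ∞ g)
    (h : ∀ q, F q = (f q, g q)) (q : ℝ × ℝ) : psd F q = (psds f q, psds g q) := by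
  obtain rfl : F = fun q => (f q, g q) := funext h
  rw [psds_eq_fderiv hf, psds_eq_fderiv hg]
  exact ((hasDerivAt_slice_s hf q).prodMk (hasDerivAt_slice_s hg q)).deriv

lemma ptd_eq (F : ℝ × ℝ → ℝ × ℝ) {f g : ℝ × ℝ → ℝ} (hf : ContDiff ℝ ∞ f) (hg : ContDiff ℝ ∞ g)
    (h : ∀ q, F q = (f q, g q)) (q : ℝ × ℝ) : ptd F q = (ptds f q, ptds g q) := by
  obtain rfl : F = fun q => (f q, g q) := funext h
  rw [ptds_eq_fderiv hf, ptds_eq_fderiv hg]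
  exact ((hasDerivAt_slice_t hf q).prodMk (hasDerivAt_slice_t hg q)).deriv

/-- Derivative of `w` from the relation `w² (a² + b²) = 1`. -/
lemma deriv_w {w a b dw da db : ℝ} (h : w * w * (a * a + b * b) = 1)
    (hd : (dw * w + w * dw) * (a * a + b * b) + w * w * (da * a + a * da + (db * b + b * db)) = 0) :
    dw = -(w * w * w * (a * da + b * db)) := by
  have hw : w ≠ 0 := by rintro rfl; simp at h
  linear_combination (w / 2) * hd - dw * h

lemma core (X Y w : ℝ × ℝ → ℝ) (hX : ContDiff ℝ ∞ X) (hY : ContDiff ℝ ∞ Y) (hw : ContDiff ℝ ∞ w)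
    (a b a_s b_s a_t b_t a_ss b_ss a_ts b_ts a_tt b_tt a_tts b_tts P Q : ℝ × ℝ → ℝ)
    (ha : psds X = a) (hb : psds Y = b)
    (has : psds a = a_s) (hbs : psds b = b_s) (hat : ptds a = a_t) (hbt : ptds b = b_t)
    (hass : psds a_s = a_ss) (hbss : psds b_s = b_ss)
    (hats : psds a_t = a_ts) (hbts : psds b_t = b_ts)
    (hatt : ptds a_t = a_tt) (hbtt : ptds b_t = b_tt)
    (hatts : psds a_tt = a_tts) (hbtts : psds b_tt = b_tts)
    (hP : ptds (ptds X) = P) (hQ : ptds (ptds Y) = Q)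
    (hrel : ∀ q, w q * w q * (a q * a q + b q * b q) = 1) (κ : ℝ × ℝ → ℝ)
    (hκ : κ = fun q => w q * w q * w q * (a q * b_s q + -(b q * a_s q))) (q : ℝ × ℝ) :
    ptds (ptds κ) q =
      -(w q * psds (fun q' => w q' * psds (fun q => P q * (w q * b q) + Q q * -(w q * a q)) q') q)
      + (w q * psds κ q) * (w q * a q * P q + w q * b q * Q q)
      - (κ q) ^ 2 * (w q * b q * P q + -(w q * a q) * Q q)
      + 2 * (w q * a_t q * (w q * b q) + w q * b_t q * -(w q * a q))
          * (w q * a q * (w q * psds (fun q => w q * a_t q) q)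
             + w q * b q * (w q * psds (fun q => w q * b_t q) q))
      + 4 * (w q * a_t q * (w q * a q) + w q * b_t q * (w q * b q))
          * (w q * b q * (w q * psds (fun q => w q * a_t q) q)
             + -(w q * a q) * (w q * psds (fun q => w q * b_t q) q))
      + 6 * κ q * (w q * a_t q * (w q * a q) + w q * b_t q * (w q * b q)) ^ 2
      - 3 * κ q * (w q * a_t q * (w q * b q) + w q * b_t q * -(w q * a q)) ^ 2 := by
  have ca : ContDiff ℝ ∞ a := ha ▸ contDiff_psds hX
  have cb : ContDiff ℝ ∞ b := hb ▸ contDiff_psds hY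
  have cas : ContDiff ℝ ∞ a_s := has ▸ contDiff_psds ca
  have cbs : ContDiff ℝ ∞ b_s := hbs ▸ contDiff_psds cb
  have cat : ContDiff ℝ ∞ a_t := hat ▸ contDiff_ptds ca
  have cbt : ContDiff ℝ ∞ b_t := hbt ▸ contDiff_ptds cb
  have cass : ContDiff ℝ ∞ a_ss := hass ▸ contDiff_psds cas
  have cbss : ContDiff ℝ ∞ b_ss := hbss ▸ contDiff_psds cbs
  have cats : ContDiff ℝ ∞ a_ts := hats ▸ contDiff_psds cat
  have cbts : ContDiff ℝ ∞ b_ts := hbts ▸ contDiff_psds cbt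
  have catt : ContDiff ℝ ∞ a_tt := hatt ▸ contDiff_ptds cat
  have cbtt : ContDiff ℝ ∞ b_tt := hbtt ▸ contDiff_ptds cbt
  have cP : ContDiff ℝ ∞ P := hP ▸ contDiff_ptds (contDiff_ptds hX)
  have cQ : ContDiff ℝ ∞ Q := hQ ▸ contDiff_ptds (contDiff_ptds hY)
  have hast : ptds a_s = a_ts := by rw [← has, ← psds_ptds_comm ca, hat, hats]
  have hbst : ptds b_s = b_ts := by rw [← hbs, ← psds_ptds_comm cb, hbt, hbts]
  have hatst : ptds a_ts = a_tts := by rw [← hats, ← psds_ptds_comm cat, hatt, hatts]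
  have hbtst : ptds b_ts = b_tts := by rw [← hbts, ← psds_ptds_comm cbt, hbtt, hbtts]
  have hPs : psds P = a_tt := by
    rw [← hP, psds_ptds_comm (contDiff_ptds hX), psds_ptds_comm hX, ha, hat, hatt]
  have hQs : psds Q = b_tt := by
    rw [← hQ, psds_ptds_comm (contDiff_ptds hY), psds_ptds_comm hY, hb, hbt, hbtt]
  have hrel' : (fun q => w q * w q * (a q * a q + b q * b q)) = fun _ => (1 : ℝ) := funext hrel
  have hws : psds w = fun q => -(w q * w q * w q * (a q * a_s q + b q * b_s q)) := by
    funext q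
    have h := congrFun (congrArg psds hrel') q
    simp (disch := fun_prop) only [psds_mul, psds_add, has, hbs] at h
    refine deriv_w (hrel q) (h.trans ?_)
    simp [psds]
  have hwt : ptds w = fun q => -(w q * w q * w q * (a q * a_t q + b q * b_t q)) := by
    funext q
    have h := congrFun (congrArg ptds hrel') q
    simp (disch := fun_prop) only [ptds_mul, ptds_add, hat, hbt] at h
    refine deriv_w (hrel q) (h.trans ?_)
    simp [ptds]
  subst hκ
  simp (disch := fun_prop) only [psds_mul, psds_add, psds_neg, ptds_mul, ptds_add, ptds_neg,
    has, hbs, hat, hbt, hass, hbss, hats, hbts, hatt, hbtt, hatts, hbtts, hast, hbst, hatst, hbtst,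
    hPs, hQs, hws, hwt]
  have hr := hrel q
  linear_combination ((9) * a q * a_t q ^ 2 * b_s q * w q ^ 5
    + (-4) * Q q * a q * a_s q ^ 2 * w q ^ 5
    + (3) * P q * a q * a_s q * b_s q * w q ^ 5
    + (-1) * Q q * a q * b_s q ^ 2 * w q ^ 5
    + (-6) * a q * a_s q * a_t q * b_t q * w q ^ 5
    + (3) * a q * b_s q * b_t q ^ 2 * w q ^ 5
    + (-2) * a_t q * b_ts q * w q ^ 3
    + (-3) * a_tt q * b_s q * w q ^ 3
    + (6) * a_t q * b q * b_s q * b_t q * w q ^ 5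
    + (-3) * a_s q * a_t q ^ 2 * b q * w q ^ 5
    + (1) * P q * a_s q ^ 2 * b q * w q ^ 5
    + (3) * a_s q * b_tt q * w q ^ 3
    + (1) * Q q * a_ss q * w q ^ 3
    + (-3) * Q q * a_s q * b q * b_s q * w q ^ 5
    + (-1) * P q * b_ss q * w q ^ 3
    + (4) * P q * b q * b_s q ^ 2 * w q ^ 5
    + (2) * a_ts q * b_t q * w q ^ 3
    + (-9) * a_s q * b q * b_t q ^ 2 * w q ^ 5) * hr

/-- Second-order evolution equation for the signed curvature of a moving regular plane
curve under an arbitrary evolution velocity `u = ∂_tγ`: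
`𝒟_t𝒟_t κ = −∇_τ∇_τ(𝒟_t u · n) + (∇_τ κ)(τ·𝒟_t u) − κ²(n·𝒟_t u)
  + 2(∇_τ u·n)(τ·∇_τ∇_τ u) + 4(∇_τ u·τ)(n·∇_τ∇_τ u) + 6κ(∇_τ u·τ)² − 3κ(∇_τ u·n)²`,
where `σ = ‖∂_sγ‖`, `τ = σ⁻¹∂_sγ`, `n = (τ², −τ¹)`, `κ = (∇_τ n)·τ`, and
`∇_τ f = σ⁻¹∂_s f`. -/
theorem second_order_evolution_of_curvature (γ : ℝ × ℝ → ℝ × ℝ) (hγ : ContDiff ℝ (⊤ : ℕ∞) γ)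
    (σ : ℝ × ℝ → ℝ)
    (hσ : ∀ q, σ q = Real.sqrt ((psd γ q).1 ^ 2 + (psd γ q).2 ^ 2))
    (hσpos : ∀ q, 0 < σ q)
    (τ n u : ℝ × ℝ → ℝ × ℝ) (κ : ℝ × ℝ → ℝ)
    (hτ : ∀ q, τ q = (σ q)⁻¹ • psd γ q)
    (hn : ∀ q, n q = ((τ q).2, -(τ q).1))
    (hκ : ∀ q, κ q = dotp ((σ q)⁻¹ • psd n q) (τ q))
    (hu : ∀ q, u q = ptd γ q) :
    ∀ q, ptds (fun q' => ptds κ q') q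
      = -((σ q)⁻¹ * psds (fun q' =>
            (σ q')⁻¹ * psds (fun q'' => dotp (ptd u q'') (n q'')) q') q)
        + ((σ q)⁻¹ * psds κ q) * dotp (τ q) (ptd u q)
        - (κ q) ^ 2 * dotp (n q) (ptd u q)
        + 2 * dotp ((σ q)⁻¹ • psd u q) (n q)
            * dotp (τ q) ((σ q)⁻¹ • psd (fun q' => (σ q')⁻¹ • psd u q') q)
        + 4 * dotp ((σ q)⁻¹ • psd u q) (τ q)
            * dotp (n q) ((σ q)⁻¹ • psd (fun q' => (σ q')⁻¹ • psd u q') q)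
        + 6 * κ q * (dotp ((σ q)⁻¹ • psd u q) (τ q)) ^ 2
        - 3 * κ q * (dotp ((σ q)⁻¹ • psd u q) (n q)) ^ 2 := by
  have hX : ContDiff ℝ ∞ (fun q => (γ q).1) := contDiff_fst.comp hγ
  have hY : ContDiff ℝ ∞ (fun q => (γ q).2) := contDiff_snd.comp hγ
  generalize hXd : (fun q => (γ q).1) = X at hX
  generalize hYd : (fun q => (γ q).2) = Y at hY
  have hγXY : ∀ q, γ q = (X q, Y q) := by intro q; rw [← hXd, ← hYd]
  obtain ⟨a, ha⟩ : ∃ a, psds X = a := ⟨_, rfl⟩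
  obtain ⟨b, hb⟩ : ∃ b, psds Y = b := ⟨_, rfl⟩
  have ca : ContDiff ℝ ∞ a := ha ▸ contDiff_psds hX
  have cb : ContDiff ℝ ∞ b := hb ▸ contDiff_psds hY
  have hγs : ∀ q, psd γ q = (a q, b q) := by
    intro q; rw [psd_eq γ hX hY hγXY, ha, hb]
  have hσ2 : ∀ q, σ q * σ q = a q * a q + b q * b q := by
    intro q
    rw [hσ, hγs, Real.mul_self_sqrt (by positivity)]
    ring
  have cσ : ContDiff ℝ ∞ σ := by
    have : σ = fun q => Real.sqrt (a q * a q + b q * b q) := by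
      funext q; rw [← hσ2, Real.sqrt_mul_self (hσpos q).le]
    rw [this]
    refine ContDiff.sqrt (by fun_prop) fun q => ?_
    rw [← hσ2]
    exact (mul_pos (hσpos q) (hσpos q)).ne'
  obtain ⟨w, hw⟩ : ∃ w : ℝ × ℝ → ℝ, ∀ q, (σ q)⁻¹ = w q := ⟨_, fun _ => rfl⟩
  have cw : ContDiff ℝ ∞ w := by
    have : w = fun q => (σ q)⁻¹ := funext fun q => (hw q).symm
    rw [this]
    exact cσ.inv fun q => (hσpos q).ne'
  have hrel : ∀ q, w q * w q * (a q * a q + b q * b q) = 1 := by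
    intro q
    have := (hσpos q).ne'
    rw [← hσ2, ← hw]
    field_simp
  have hτ' : ∀ q, τ q = (w q * a q, w q * b q) := by
    intro q; rw [hτ, hw, hγs]; rfl
  have hn' : ∀ q, n q = (w q * b q, -(w q * a q)) := by
    intro q; rw [hn, hτ']
  have hκ' : κ = fun q => w q * w q * w q * (a q * psds b q + -(b q * psds a q)) := by
    funext q
    rw [hκ, hw, hτ', psd_eq n (cw.mul cb) (cw.mul ca).neg hn']
    simp (disch := fun_prop) only [psds_mul, psds_neg, dotp, Prod.smul_fst, Prod.smul_snd,
      smul_eq_mul]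
    ring
  have cXt := contDiff_ptds hX
  have cYt := contDiff_ptds hY
  have hu' : ∀ q, u q = (ptds X q, ptds Y q) := by
    intro q; rw [hu, ptd_eq γ hX hY hγXY]
  have hut : ∀ q, ptd u q = (ptds (ptds X) q, ptds (ptds Y) q) := ptd_eq u cXt cYt hu'
  have hus : ∀ q, psd u q = (ptds a q, ptds b q) := by
    intro q
    rw [psd_eq u cXt cYt hu', psds_ptds_comm hX, psds_ptds_comm hY, ha, hb]
  have huss : ∀ q, psd (fun q' => w q' • psd u q') q
      = (psds (fun q => w q * ptds a q) q, psds (fun q => w q * ptds b q) q) :=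
    psd_eq _ (cw.mul (contDiff_ptds ca)) (cw.mul (contDiff_ptds cb)) fun q => by
      rw [hus]; rfl
  intro q
  simp only [hw]
  simp only [huss]
  simp only [hus, hut, hτ', hn', dotp, Prod.smul_fst, Prod.smul_snd, smul_eq_mul]
  exact core X Y w hX hY cw a b _ _ _ _ _ _ _ _ _ _ _ _ _ _ ha hb rfl rfl rfl rfl rfl rfl rfl rfl
    rfl rfl rfl rfl rfl rfl hrel κ hκ' q
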